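/- (Two-scale relation for the prewavelet coefficients, key identity in Theorem 5.3.) Let χ₀, χ₁, χ₂ ∈ L²(ℝ) be compactly supported real functions and h > 0. Let (a_α) and (b_α) be finitely supported real sequences with χ₀ = Σ_α a_α χ₁(· − hα) and χ₁ = Σ_α b_α χ₂(· − (h/2)α) almost everywhere. Define g⁰_α = ∫_ℝ χ₀(x) χ₁(x + hα) dx, g¹_α = ∫_ℝ χ₁(x) χ₂(x + (h/2)α) dx, and c_α = Σ_β a_β b_{α+2β}. Then for every α ∈ ℤ: g⁰_α = Σ_{β∈ℤ} c_{2α−β} g¹_β. -/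

import Mathlib

open MeasureTheory

/-!
Inserting both refinement equations into `∫ χ₀(x) χ₁(x + hα) dx` and translating the
integration variable gives `g⁰_α = Σ_β a_β Σ_γ b_γ g¹_{2(α+β)-γ}`. Substituting `ε = 2(α+β) - γ`
and exchanging the finite sums collects the factor `Σ_β a_β b_{2α-ε+2β} = c_{2α-ε}` in front of
`g¹_ε`.

The two factors are refined independently, so the first may be refined along a chain `χ₀, χ₁` and
the second along another chain `ψ₁, ψ₂`; a conjugate chain covers the sesquilinear correlation.
-/

section Mask

open Function

variable {ι Γ R : Type*} [AddCommGroup Γ] [NonUnitalSemiring R] [TopologicalSpace R]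

lemma tsum_mul_eq_sum_of_finite_support {a : ι → R} (ha : a.support.Finite) (F : ι → R) :
    ∑' i, a i * F i = ∑ i ∈ ha.toFinset, a i * F i :=
  tsum_eq_sum' <| by simpa using support_mul_subset_left a F

/-- The correlation `c_γ = Σ_i a_i b_{γ + δ i}` of a coarse mask `a` with a fine mask `b`, where
`δ` maps the coarse indices to the fine ones (`δ i = 2 i` for dyadic refinement). -/
noncomputable def correlationMask (δ : ι → Γ) (a : ι → R) (b : Γ → R) (γ : Γ) : R :=
  ∑' i, a i * b (γ + δ i)

lemma summable_reflect_mul {b : Γ → R} (hb : b.support.Finite) (g : Γ → R) (n : Γ) :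
    Summable fun β => b (n - β) * g β :=
  summable_of_hasFiniteSupport <|
    (hb.preimage (sub_right_injective (b := n)).injOn).subset (support_mul_subset_left _ g)

lemma tsum_reflect_mul (b g : Γ → R) (n : Γ) :
    ∑' β, b (n - β) * g β = ∑' γ, b γ * g (n - γ) := by
  simpa using (Equiv.subLeft n).tsum_eq fun γ => b γ * g (n - γ)

theorem tsum_correlationMask_mul [IsTopologicalSemiring R] [T2Space R] (δ : ι → Γ) {a : ι → R}
    {b : Γ → R} (ha : a.support.Finite) (hb : b.support.Finite) (g : Γ → R) (n : Γ) :
    ∑' β, correlationMask δ a b (n - β) * g β =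
      ∑' i, a i * ∑' γ, b γ * g (n + δ i - γ) := by
  calc ∑' β, correlationMask δ a b (n - β) * g β
      = ∑' β, ∑ i ∈ ha.toFinset, a i * (b (n + δ i - β) * g β) := by
        simp_rw [correlationMask, tsum_mul_eq_sum_of_finite_support ha, Finset.sum_mul, mul_assoc,
          sub_add_eq_add_sub]
    _ = ∑ i ∈ ha.toFinset, a i * ∑' β, b (n + δ i - β) * g β := by
        rw [Summable.tsum_finsetSum fun i _ => (summable_reflect_mul hb g _).mul_left _]
        simp_rw [(summable_reflect_mul hb g _).tsum_mul_left]
    _ = ∑' i, a i * ∑' γ, b γ * g (n + δ i - γ) := by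
        simp_rw [tsum_reflect_mul, tsum_mul_eq_sum_of_finite_support ha]

end Mask

section Correlation

variable {ι G 𝕜 : Type*} [RCLike 𝕜] [AddCommGroup G] [MeasurableSpace G] {μ : Measure G}
  {p q : ENNReal} {f g k : G → 𝕜} {a : ι → 𝕜} {τ : ι → G}

/-- The cross-correlation `t ↦ ∫ f(x) g(x + t) dμ(x)`. No conjugate is taken, so it is
bilinear. -/
noncomputable def crossCorrelation (μ : Measure G) (f g : G → 𝕜) (t : G) : 𝕜 :=
  ∫ x, f x * g (x + t) ∂μ

/-- The refinement equation `f = Σ_i a_i g(· - τ i)` almost everywhere, with mask `a` and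
translations `τ`. -/
def IsRefinement (μ : Measure G) (τ : ι → G) (a : ι → 𝕜) (f g : G → 𝕜) : Prop :=
  ∀ᵐ x ∂μ, f x = ∑' i, a i * g (x - τ i)

lemma IsRefinement.ae_eq_sum (hf : IsRefinement μ τ a f g) (ha : a.support.Finite) :
    f =ᵐ[μ] fun x => ∑ i ∈ ha.toFinset, a i * g (x - τ i) :=
  hf.mono fun _ hx => hx.trans (tsum_mul_eq_sum_of_finite_support ha _)

variable [MeasurableAdd G] [μ.IsAddRightInvariant]

lemma memLp_comp_sub_right (hg : MemLp g p μ) (s : G) : MemLp (fun x => g (x - s)) p μ := by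
  simpa only [sub_eq_add_neg, Function.comp_def] using
    hg.comp_measurePreserving (measurePreserving_add_right μ (-s))

lemma IsRefinement.memLp (hf : IsRefinement μ τ a f g) (ha : a.support.Finite)
    (hg : MemLp g p μ) : MemLp f p μ :=
  (memLp_finsetSum _ fun i _ => (memLp_comp_sub_right hg (τ i)).const_mul (a i)).ae_eq
    (hf.ae_eq_sum ha).symm

lemma integrable_mul_comp_add_right [p.HolderConjugate q] (hf : MemLp f p μ) (hg : MemLp g q μ)
    (t : G) : Integrable (fun x => f x * g (x + t)) μ :=
  hf.integrable_mul (hg.comp_measurePreserving (measurePreserving_add_right μ t))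

lemma crossCorrelation_comm (f g : G → 𝕜) (t : G) :
    crossCorrelation μ f g t = crossCorrelation μ g f (-t) := by
  rw [crossCorrelation, crossCorrelation, ← integral_add_right_eq_self _ (-t)]
  simp only [neg_add_cancel_right, mul_comm]

lemma crossCorrelation_comp_sub_left (f g : G → 𝕜) (s t : G) :
    crossCorrelation μ (fun x => f (x - s)) g t = crossCorrelation μ f g (t + s) := by
  rw [crossCorrelation, crossCorrelation, ← integral_add_right_eq_self _ s]
  simp only [add_sub_cancel_right, add_assoc, add_comm s]

theorem IsRefinement.crossCorrelation_left [p.HolderConjugate q] (hf : IsRefinement μ τ a f g)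
    (ha : a.support.Finite) (hg : MemLp g p μ) (hk : MemLp k q μ) (t : G) :
    crossCorrelation μ f k t = ∑' i, a i * crossCorrelation μ g k (t + τ i) := by
  calc crossCorrelation μ f k t
      = ∫ x, ∑ i ∈ ha.toFinset, a i * (g (x - τ i) * k (x + t)) ∂μ := by
        refine integral_congr_ae ((hf.ae_eq_sum ha).mono fun x hx => ?_)
        simp only [hx, Finset.sum_mul, mul_assoc]
    _ = ∑ i ∈ ha.toFinset, a i * crossCorrelation μ (fun x => g (x - τ i)) k t := by
        rw [integral_finsetSum _ fun i _ =>
          (integrable_mul_comp_add_right (memLp_comp_sub_right hg (τ i)) hk t).const_mul (a i)]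
        simp only [integral_const_mul, crossCorrelation]
    _ = ∑' i, a i * crossCorrelation μ g k (t + τ i) := by
        simp only [crossCorrelation_comp_sub_left, tsum_mul_eq_sum_of_finite_support ha]

theorem IsRefinement.crossCorrelation_right [p.HolderConjugate q] (hf : IsRefinement μ τ a f g)
    (ha : a.support.Finite) (hk : MemLp k p μ) (hg : MemLp g q μ) (t : G) :
    crossCorrelation μ k f t = ∑' i, a i * crossCorrelation μ k g (t - τ i) := by
  have : q.HolderConjugate p := .symm
  rw [crossCorrelation_comm, hf.crossCorrelation_left ha hg hk]
  simp only [crossCorrelation_comm g k, neg_add_rev, neg_neg, sub_eq_neg_add]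

theorem prewavelet_coefficients_two_scale_general {Γ : Type*} [AddCommGroup Γ]
    [p.HolderConjugate q] {χ₀ χ₁ ψ₁ ψ₂ : G → 𝕜} {b : Γ → 𝕜} {δ : ι → Γ} {τ₁ : Γ →+ G}
    (hτ : ∀ i, τ₁ (δ i) = τ i) (hχ₁ : MemLp χ₁ p μ) (hψ₂ : MemLp ψ₂ q μ)
    (ha : a.support.Finite) (hb : b.support.Finite)
    (hχ : IsRefinement μ τ a χ₀ χ₁) (hψ : IsRefinement μ τ₁ b ψ₁ ψ₂) (i : ι) :
    crossCorrelation μ χ₀ ψ₁ (τ i) =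
      ∑' β, correlationMask δ a b (δ i - β) * crossCorrelation μ χ₁ ψ₂ (τ₁ β) := by
  rw [hχ.crossCorrelation_left ha hχ₁ (hψ.memLp hb hψ₂),
    tsum_correlationMask_mul δ ha hb (fun β => crossCorrelation μ χ₁ ψ₂ (τ₁ β))]
  simp only [hψ.crossCorrelation_right hb hχ₁ hψ₂, map_sub, map_add, hτ]

end Correlation

/-- Two-scale relation for the prewavelet coefficients (key identity in Theorem 5.3):
if `χ₀ = Σ_α a_α χ₁(· − hα)` and `χ₁ = Σ_α b_α χ₂(· − (h/2)α)` a.e., then the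
cross-correlation coefficients `g⁰_α = ∫ χ₀(x) χ₁(x + hα) dx` and
`g¹_α = ∫ χ₁(x) χ₂(x + (h/2)α) dx` satisfy `g⁰_α = Σ_β c_{2α−β} g¹_β`, where
`c_α = Σ_β a_β b_{α+2β}`. -/
theorem prewavelet_coefficients_two_scale (χ₀ χ₁ χ₂ : ℝ → ℝ)
    (h₀ : MemLp χ₀ 2 volume) (h₁ : MemLp χ₁ 2 volume) (h₂ : MemLp χ₂ 2 volume)
    (hs₀ : HasCompactSupport χ₀) (hs₁ : HasCompactSupport χ₁) (hs₂ : HasCompactSupport χ₂)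
    (h : ℝ) (hh : 0 < h)
    (a b : ℤ → ℝ)
    (ha : (Function.support a).Finite) (hb : (Function.support b).Finite)
    (href₀ : ∀ᵐ x : ℝ, χ₀ x = ∑' α : ℤ, a α * χ₁ (x - h * α))
    (href₁ : ∀ᵐ x : ℝ, χ₁ x = ∑' α : ℤ, b α * χ₂ (x - (h / 2) * α))
    (g₀ g₁ c : ℤ → ℝ)
    (hg₀ : ∀ α : ℤ, g₀ α = ∫ x : ℝ, χ₀ x * χ₁ (x + h * α))
    (hg₁ : ∀ α : ℤ, g₁ α = ∫ x : ℝ, χ₁ x * χ₂ (x + (h / 2) * α))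
    (hc : ∀ α : ℤ, c α = ∑' β : ℤ, a β * b (α + 2 * β)) :
    ∀ α : ℤ, g₀ α = ∑' β : ℤ, c (2 * α - β) * g₁ β := by
  simp_rw [hg₀, hg₁, hc]
  exact prewavelet_coefficients_two_scale_general (δ := (2 * ·))
    (τ₁ := (AddMonoidHom.mulLeft (h / 2)).comp (Int.castAddHom ℝ))
    (fun α => show h / 2 * (2 * α : ℤ) = h * α by push_cast; ring) h₁ h₂ ha hb href₀ href₁
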